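/- Let G be a finite simple graph, M a maximum matching of G, and (H, H') ∈ M₂(G, M). Let P be a path in G whose edges alternately belong to M \ H and H \ M, whose first and last edges belong to M \ H, and whose two end-vertices are not covered by H (a maximal M-H alternating path of odd length starting and ending with edges of M). Then every vertex lying on P is covered by H', i.e., is incident to an edge of H'. -/

import Mathlib

open SimpleGraph

/-- A matching of `G`, given as a finite set of edges of `G` that are pairwise non-adjacent. -/
def IsMatchingE {V : Type*} (G : SimpleGraph V) (M : Finset (Sym2 V)) : Prop :=
  ↑M ⊆ G.edgeSet ∧ ∀ e ∈ M, ∀ f ∈ M, e ≠ f → ∀ v : V, ¬(v ∈ e ∧ v ∈ f)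

/-- A vertex is covered by a set of edges if some edge of it is incident to the vertex. -/
def Covers {V : Type*} (M : Finset (Sym2 V)) (v : V) : Prop := ∃ e ∈ M, v ∈ e

/-- `β(G)`: the maximum size of a matching of `G`. -/
noncomputable def gBeta {V : Type*} (G : SimpleGraph V) : ℕ :=
  sSup {n | ∃ M : Finset (Sym2 V), IsMatchingE G M ∧ M.card = n}

/-- `λ(G)`: the maximum of `|H| + |H'|` over pairs `(H, H')` of disjoint matchings of `G`. -/
noncomputable def gLam {V : Type*} (G : SimpleGraph V) : ℕ :=
  sSup {n | ∃ H H' : Finset (Sym2 V), IsMatchingE G H ∧ IsMatchingE G H' ∧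
    Disjoint H H' ∧ H.card + H'.card = n}

/-- `α(G)`: the maximum of `|H|` over pairs `(H, H')` of disjoint matchings of `G`
with `|H| + |H'| = λ(G)`. -/
noncomputable def gAlpha {V : Type*} (G : SimpleGraph V) : ℕ :=
  sSup {n | ∃ H H' : Finset (Sym2 V), IsMatchingE G H ∧ IsMatchingE G H' ∧
    Disjoint H H' ∧ H.card + H'.card = gLam G ∧ H.card = n}

/-- `β₁(G)`: the maximum of `β(G \ F)` over maximum matchings `F` of `G`. -/
noncomputable def gBeta1 {V : Type*} (G : SimpleGraph V) : ℕ :=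
  sSup {n | ∃ F : Finset (Sym2 V), IsMatchingE G F ∧ F.card = gBeta G ∧
    gBeta (G.deleteEdges ↑F) = n}

/-- Membership in `M₂(G)`: `(H, H')` is a pair of disjoint matchings of `G` with
`|H| + |H'| = λ(G)` and `|H| = α(G)`. -/
def InM2 {V : Type*} (G : SimpleGraph V) (H H' : Finset (Sym2 V)) : Prop :=
  IsMatchingE G H ∧ IsMatchingE G H' ∧ Disjoint H H' ∧
  H.card + H'.card = gLam G ∧ H.card = gAlpha G

/-- Membership in `M₂(G, M)`: pairs from `M₂(G)` maximizing `|M ∩ (H ∪ H')|`. -/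
def InM2M {V : Type*} [DecidableEq V] (G : SimpleGraph V) (M H H' : Finset (Sym2 V)) : Prop :=
  InM2 G H H' ∧ ∀ K K' : Finset (Sym2 V), InM2 G K K' →
    (M ∩ (K ∪ K')).card ≤ (M ∩ (H ∪ H')).card

/-- The degree of a vertex `v` in the graph `F`. -/
noncomputable def fdeg {V : Type*} (F : SimpleGraph V) (v : V) : ℕ := (F.neighborSet v).ncard

/-- The spanner: two paths `a₁a₂a₃a₄a₅` and `b₁b₂b₃b₄b₅` joined by the edge `a₃b₃`.
Vertices `0..4` are `a₁..a₅` and `5..9` are `b₁..b₅`. -/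
def Spanner10 : SimpleGraph (Fin 10) :=
  SimpleGraph.fromEdgeSet
    {s(0, 1), s(1, 2), s(2, 3), s(3, 4), s(5, 6), s(6, 7), s(7, 8), s(8, 9), s(2, 7)}

/-- An S-forest: every connected component is isomorphic to the spanner. -/
def IsSForest {V : Type*} (F : SimpleGraph V) : Prop :=
  ∀ c : F.ConnectedComponent, Nonempty ((F.induce c.supp) ≃g Spanner10)

/-- `U(F)`: edges of `F` incident to a vertex of degree 1. -/
def USet {V : Type*} (F : SimpleGraph V) : Set (Sym2 V) :=
  {e | e ∈ F.edgeSet ∧ ∃ v ∈ e, fdeg F v = 1}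

/-- `L(F)`: edges of `F` not in `U(F)` incident to a vertex of degree 2. -/
def LSet {V : Type*} (F : SimpleGraph V) : Set (Sym2 V) :=
  {e | e ∈ F.edgeSet ∧ e ∉ USet F ∧ ∃ v ∈ e, fdeg F v = 2}

/-- `w` is the base of the 1-vertex `u` of `F`: a 3-vertex at `F`-distance 2 from `u`. -/
def IsBase {V : Type*} (F : SimpleGraph V) (u w : V) : Prop :=
  fdeg F w = 3 ∧ F.dist u w = 2

/-- `Δ(G, F)`: edges of `G` joining a 1-vertex of `F` to its base. -/
def DeltaSet {V : Type*} (G F : SimpleGraph V) : Set (Sym2 V) :=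
  {e | e ∈ G.edgeSet ∧ ∃ u w : V, e = s(u, w) ∧ fdeg F u = 1 ∧ IsBase F u w}

/-- `B(G, F) = E(G) \ (U(F) ∪ L(F) ∪ Δ(G, F))`. -/
def BSet {V : Type*} (G F : SimpleGraph V) : Set (Sym2 V) :=
  G.edgeSet \ (USet F ∪ LSet F ∪ DeltaSet G F)

/-- Condition (a): no 1-vertex of `F` is incident to an edge from `B(G, F)`. -/
def CondA {V : Type*} (G F : SimpleGraph V) : Prop :=
  ∀ v : V, fdeg F v = 1 → ∀ e ∈ BSet G F, v ∉ e

/-- Condition (b): if a 1-vertex `u` of `F` is incident to an edge from `Δ(G, F)`, then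
the 2-vertex of `F` adjacent to `u` in `F` is not incident to any edge from `B(G, F)`. -/
def CondB {V : Type*} (G F : SimpleGraph V) : Prop :=
  ∀ u v : V, fdeg F u = 1 → (∃ e ∈ DeltaSet G F, u ∈ e) →
    F.Adj u v → fdeg F v = 2 → ∀ e ∈ BSet G F, v ∉ e

/-- Condition (c): for every `L(F)`-`B(G, F)` alternating even closed trail of `G`
containing an edge joining two 2-vertices of `F`, the graph formed by its edges belonging
to `B(G, F)` is not bipartite (2-colorable). -/
def CondC {V : Type*} (G F : SimpleGraph V) : Prop :=
  ∀ (n : ℕ) (e : ℕ → Sym2 V),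
    1 ≤ n →
    (∀ i j, i < 2 * n → j < 2 * n → e i = e j → i = j) →
    (∀ i, i < 2 * n → e i ∈ G.edgeSet) →
    (∀ i, i + 1 < 2 * n → ∃ v : V, v ∈ e i ∧ v ∈ e (i + 1)) →
    (∃ v : V, v ∈ e (2 * n - 1) ∧ v ∈ e 0) →
    (∀ i, i < 2 * n → (i % 2 = 0 → e i ∈ LSet F) ∧ (i % 2 = 1 → e i ∈ BSet G F)) →
    (∃ i, i < 2 * n ∧ ∀ v ∈ e i, fdeg F v = 2) →
    ¬ (SimpleGraph.fromEdgeSet {f | ∃ i, i < 2 * n ∧ f = e i ∧ f ∈ BSet G F}).Colorable 2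

/-!
Let an edge `e ∈ M \ H` have an end `w` not covered by `H'`. As `|H| + |H'|` is maximum, `e` cannot
be added to `H'`, so the other end of `e` lies on some `f ∈ H'`. Exchanging `f` for `e` in `H'`
changes neither cardinality, hence stays inside `M₂(G)`; since `f` shares an end with `e ∈ M`, it is
not in `M`, and so the exchange increases `|M ∩ (H ∪ H')|`, contradicting the choice of `(H, H')`.
On an alternating path of odd length that starts in `M \ H`, every vertex lies on such an edge `e`.
-/

section

variable {V : Type*} {G : SimpleGraph V} {M N H H' : Finset (Sym2 V)} {e f : Sym2 V} {w : V}

theorem Covers.mono (hN : Covers N w) (hNM : N ⊆ M) : Covers M w :=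
  let ⟨e, he, hw⟩ := hN
  ⟨e, hNM he, hw⟩

theorem IsMatchingE.mono (hM : IsMatchingE G M) (hNM : N ⊆ M) : IsMatchingE G N :=
  ⟨fun _ he ↦ hM.1 (hNM he), fun e he f hf ↦ hM.2 e (hNM he) f (hNM hf)⟩

theorem IsMatchingE.eq_of_mem (hM : IsMatchingE G M) (he : e ∈ M) (hf : f ∈ M)
    (hwe : w ∈ e) (hwf : w ∈ f) : e = f :=
  not_imp_comm.1 (hM.2 e he f hf) fun h ↦ h w ⟨hwe, hwf⟩

theorem card_add_card_le_gLam {B : ℕ} (hB : ∀ N, IsMatchingE G N → N.card ≤ B)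
    (hH : IsMatchingE G H) (hH' : IsMatchingE G H') (hd : Disjoint H H') :
    H.card + H'.card ≤ gLam G := by
  refine le_csSup ⟨B + B, ?_⟩ ⟨H, H', hH, hH', hd, rfl⟩
  rintro _ ⟨K, K', hK, hK', -, rfl⟩
  exact add_le_add (hB K hK) (hB K' hK')

theorem covers_of_alternating {l : ℕ} {v : ℕ → V} {A B : Finset (Sym2 V)}
    (h : ∀ i, i < 2 * l - 1 → s(v i, v (i + 1)) ∈ if i % 2 = 0 then A else B)
    {i : ℕ} (hi : i < 2 * l) : Covers A (v i) := by
  obtain ⟨k, rfl | rfl⟩ := i.even_or_odd'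
  · exact ⟨_, by simpa using h (2 * k) (by lia), Sym2.mem_mk_left _ _⟩
  · exact ⟨_, by simpa using h (2 * k) (by lia), Sym2.mem_mk_right _ _⟩

theorem IsMatchingE.not_covers_erase [DecidableEq V] (hM : IsMatchingE G M) (hf : f ∈ M)
    (hwf : w ∈ f) : ¬Covers (M.erase f) w := by
  rintro ⟨e, he, hwe⟩
  obtain ⟨hne, heM⟩ := Finset.mem_erase.1 he
  exact hne (hM.eq_of_mem heM hf hwe hwf)

protected theorem IsMatchingE.insert [DecidableEq V] (hM : IsMatchingE G M)
    (he : e ∈ G.edgeSet) (hfree : ∀ x ∈ e, ¬Covers M x) : IsMatchingE G (insert e M) := by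
  refine ⟨?_, fun a ha b hb hne x ⟨hxa, hxb⟩ ↦ ?_⟩
  · rw [Finset.coe_insert]
    exact Set.insert_subset he hM.1
  · rcases Finset.mem_insert.1 ha with rfl | haM <;>
      rcases Finset.mem_insert.1 hb with rfl | hbM
    · exact hne rfl
    · exact hfree x hxa ⟨b, hbM, hxb⟩
    · exact hfree x hxb ⟨a, haM, hxa⟩
    · exact hM.2 a haM b hbM hne x ⟨hxa, hxb⟩

theorem InM2.exists_covers {B : ℕ} (hB : ∀ N, IsMatchingE G N → N.card ≤ B)
    (h : InM2 G H H') (he : e ∈ G.edgeSet) (heH : e ∉ H) : ∃ x ∈ e, Covers H' x := by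
  classical
  obtain ⟨hH, hH', hd, hlam, -⟩ := h
  by_contra! hfree
  have heH' : e ∉ H' := fun heH' ↦ hfree _ e.out_fst_mem ⟨e, heH', e.out_fst_mem⟩
  have hle : H.card + (insert e H').card ≤ gLam G :=
    card_add_card_le_gLam hB hH (hH'.insert he hfree)
      (Finset.disjoint_insert_right.2 ⟨heH, hd⟩)
  rw [Finset.card_insert_of_notMem heH'] at hle
  lia

theorem InM2.insert_erase [DecidableEq V] (h : InM2 G H H') (he : e ∈ G.edgeSet)
    (heH : e ∉ H) (hf : f ∈ H') (hfree : ∀ x ∈ e, ¬Covers (H'.erase f) x) :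
    InM2 G H (insert e (H'.erase f)) := by
  obtain ⟨hH, hH', hd, hlam, halpha⟩ := h
  have hsub : H'.erase f ⊆ H' := H'.erase_subset f
  have he' : e ∉ H'.erase f := fun he' ↦ hfree _ e.out_fst_mem ⟨e, he', e.out_fst_mem⟩
  have hcard : (insert e (H'.erase f)).card = H'.card := by
    rw [Finset.card_insert_of_notMem he', Finset.card_erase_add_one hf]
  exact ⟨hH, (hH'.mono hsub).insert he hfree,
    Finset.disjoint_insert_right.2 ⟨heH, hd.mono_right hsub⟩, hcard ▸ hlam, halpha⟩

theorem InM2M.mem_of_insert_erase [DecidableEq V] (h : InM2M G M H H') (heM : e ∈ M)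
    (heH : e ∉ H) (heH' : e ∉ H') (hswap : InM2 G H (insert e (H'.erase f))) : f ∈ M := by
  by_contra hfM
  refine (h.2 H _ hswap).not_gt (Finset.card_lt_card (Finset.ssubset_iff.2 ⟨e, ?_, ?_⟩))
  · simp [heH, heH']
  · intro g hg
    simp only [Finset.mem_insert, Finset.mem_inter, Finset.mem_union, Finset.mem_erase] at hg ⊢
    grind

theorem stmt6_general [DecidableEq V] {B : ℕ} (hB : ∀ N, IsMatchingE G N → N.card ≤ B)
    (hM : IsMatchingE G M) (h : InM2M G M H H') (hw : Covers (M \ H) w) : Covers H' w := by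
  by_contra hwH'
  obtain ⟨e, he, hwe⟩ := hw
  obtain ⟨heM, heH⟩ := Finset.mem_sdiff.1 he
  have heH' : e ∉ H' := fun heH' ↦ hwH' ⟨e, heH', hwe⟩
  obtain ⟨u, hue, f, hf, huf⟩ : ∃ u ∈ e, Covers H' u := h.1.exists_covers hB (hM.1 heM) heH
  have hfree : ∀ x ∈ e, ¬Covers (H'.erase f) x := by
    have hwu : w ≠ u := by
      rintro rfl
      exact hwH' ⟨f, hf, huf⟩
    obtain rfl : e = s(w, u) := (Sym2.mem_and_mem_iff hwu).1 ⟨hwe, hue⟩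
    refine Sym2.ball.2 ⟨fun hcov ↦ hwH' (hcov.mono (H'.erase_subset f)), ?_⟩
    exact h.1.2.1.not_covers_erase hf huf
  have hfM : f ∈ M :=
    h.mem_of_insert_erase heM heH heH' (h.1.insert_erase (hM.1 heM) heH hf hfree)
  have hef : e = f := hM.eq_of_mem heM hfM hue huf
  exact heH' (hef ▸ hf)

end

/-- let `M` be a maximum matching, `(H, H') ∈ M₂(G, M)`, and `P` a maximal
`M`-`H` alternating path of odd length starting and ending with edges of `M \ H` whose
end-vertices are not covered by `H`. Then every vertex of `P` is covered by `H'`. -/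
theorem stmt6 {V : Type*} [Fintype V] [DecidableEq V] (G : SimpleGraph V)
    (M H H' : Finset (Sym2 V)) (hM : IsMatchingE G M) (hMmax : M.card = gBeta G)
    (hHH' : InM2M G M H H')
    (l : ℕ) (hl : 1 ≤ l) (v : ℕ → V)
    (hinj : ∀ i j, i < 2 * l → j < 2 * l → v i = v j → i = j)
    (hedges : ∀ i, i < 2 * l - 1 →
      s(v i, v (i + 1)) ∈ (if i % 2 = 0 then M \ H else H \ M))
    (h0 : ¬ Covers H (v 0)) (h1 : ¬ Covers H (v (2 * l - 1))) :
    ∀ i, i < 2 * l → Covers H' (v i) :=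
  fun _ hi ↦ stmt6_general (fun N _ ↦ N.card_le_univ) hM hHH' (covers_of_alternating hedges hi)
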